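/- (Generalized Forney lemma.) For every F_{q^m}-linear code C ⊆ F_{q^m}^n of dimension k and every F_q-subspace L ⊆ F_q^n, one has dim_{F_{q^m}}(C^L) = dim_{F_q} L − dim_{F_{q^m}}((C^⊥)_L) = k − dim_{F_{q^m}}(C_{L^⊥}). -/

import Mathlib

open Submodule Module

namespace RankPaper

variable {n : ℕ}

/-- The coordinatewise `q^i`-th power map on `Fqm^n`. -/
def qpowMap (q i : ℕ) {Fqm : Type} [Field Fqm] (v : Fin n → Fqm) : Fin n → Fqm :=
  fun j => v j ^ q ^ i

/-- The Galois closure `D* = Σ_{i=0}^{m-1} D^{q^i}` of a subspace (as the span of the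
union of the images of `D` under the coordinatewise `q^i`-power maps, `0 ≤ i < m`). -/
def galClosure (q m : ℕ) {Fqm : Type} [Field Fqm] (D : Submodule Fqm (Fin n → Fqm)) :
    Submodule Fqm (Fin n → Fqm) :=
  Submodule.span Fqm (⋃ i ∈ Finset.range m, qpowMap q i '' (D : Set (Fin n → Fqm)))

/-- `D` is Galois closed if `D = D*`. -/
def GaloisClosed (q m : ℕ) {Fqm : Type} [Field Fqm] (D : Submodule Fqm (Fin n → Fqm)) : Prop :=
  galClosure q m D = D

/-- Rank weight of a subspace: `wt_R(D) = dim_{Fqm} D*`. -/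
noncomputable def wtR (q m : ℕ) {Fqm : Type} [Field Fqm]
    (D : Submodule Fqm (Fin n → Fqm)) : ℕ :=
  finrank Fqm (galClosure q m D)

/-- Rank weight of a vector: `wt_R(c) = wt_R(span {c})`. -/
noncomputable def wtRv (q m : ℕ) {Fqm : Type} [Field Fqm] (c : Fin n → Fqm) : ℕ :=
  wtR q m (Submodule.span Fqm ({c} : Set (Fin n → Fqm)))

/-- Hamming weight of a subspace: the number of coordinates where some element is nonzero. -/
noncomputable def wtH {Fqm : Type} [Field Fqm] (D : Submodule Fqm (Fin n → Fqm)) : ℕ :=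
  {i : Fin n | ∃ d ∈ D, d i ≠ 0}.ncard

/-- `r`-th generalized rank weight of a linear code. -/
noncomputable def dR (q m : ℕ) {Fqm : Type} [Field Fqm]
    (C : Submodule Fqm (Fin n → Fqm)) (r : ℕ) : ℕ :=
  sInf { dv | ∃ V : Submodule Fqm (Fin n → Fqm),
    GaloisClosed q m V ∧ r ≤ finrank Fqm ↥(C ⊓ V) ∧ dv = finrank Fqm ↥V }

/-- `r`-th generalized Hamming weight of a linear code. -/
noncomputable def dH {Fqm : Type} [Field Fqm]
    (C : Submodule Fqm (Fin n → Fqm)) (r : ℕ) : ℕ :=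
  sInf { w | ∃ D : Submodule Fqm (Fin n → Fqm), D ≤ C ∧ finrank Fqm ↥D = r ∧ w = wtH D }

/-- `r`-th relative generalized rank weight of a nested code pair. -/
noncomputable def MR (q m : ℕ) {Fqm : Type} [Field Fqm]
    (C₁ C₂ : Submodule Fqm (Fin n → Fqm)) (r : ℕ) : ℕ :=
  sInf { dv | ∃ V : Submodule Fqm (Fin n → Fqm), GaloisClosed q m V ∧
    r ≤ finrank Fqm ↥(C₁ ⊓ V) - finrank Fqm ↥(C₂ ⊓ V) ∧ dv = finrank Fqm ↥V }

/-- Minimum rank distance of an arbitrary (possibly nonlinear) code. -/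
noncomputable def dRset (q m : ℕ) {Fqm : Type} [Field Fqm] (C : Set (Fin n → Fqm)) : ℕ :=
  sInf { w | ∃ c₁ ∈ C, ∃ c₂ ∈ C, c₁ ≠ c₂ ∧ w = wtRv q m (c₁ - c₂) }

/-- The linear functional `x ↦ Σ_j x_j y_j` (dot product with `y`). -/
def dotLin {K : Type} [Field K] (y : Fin n → K) : (Fin n → K) →ₗ[K] K :=
  ∑ j, y j • LinearMap.proj j

/-- Orthogonal complement of a subspace with respect to the standard bilinear form. -/
def perp {K : Type} [Field K] (L : Submodule K (Fin n → K)) : Submodule K (Fin n → K) :=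
  ⨅ y ∈ L, LinearMap.ker (dotLin y)

/-- The coordinatewise inclusion `Fq^n → Fqm^n`. -/
def embFq (Fq Fqm : Type) [Field Fq] [Field Fqm] [Algebra Fq Fqm] :
    (Fin n → Fq) →ₗ[Fq] (Fin n → Fqm) :=
  LinearMap.pi fun j => (Algebra.linearMap Fq Fqm).comp (LinearMap.proj j)

/-- `V_L = L ⊗ Fqm`, the `Fqm`-span of `L ⊆ Fq^n` inside `Fqm^n`. -/
def VL {Fq : Type} (Fqm : Type) [Field Fq] [Field Fqm] [Algebra Fq Fqm]
    (L : Submodule Fq (Fin n → Fq)) : Submodule Fqm (Fin n → Fqm) :=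
  Submodule.span Fqm (embFq Fq Fqm '' (L : Set (Fin n → Fq)))

/-- Rank-punctured code `C^L`: the image of `C` in `Fqm^n / V_{L^⊥}`. -/
noncomputable def punct {Fq Fqm : Type} [Field Fq] [Field Fqm] [Algebra Fq Fqm]
    (L : Submodule Fq (Fin n → Fq)) (C : Submodule Fqm (Fin n → Fqm)) :
    Submodule Fqm ((Fin n → Fqm) ⧸ VL Fqm (perp L)) :=
  Submodule.map (VL Fqm (perp L)).mkQ C

/-!
Rank–nullity for `C → Fqm^n / V_{L^⊥}` gives the second equality. For the first, extension of
scalars commutes with duality, `V_{L^⊥} = (V_L)^⊥`, so `(C^⊥)_L = C^⊥ ∩ (V_{L^⊥})^⊥` is the dual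
of `C + V_{L^⊥}`; its dimension follows from `dim V_{L^⊥} = n - dim L` and the dimension formula
for a sum of subspaces.
-/

theorem finrank_map_add_finrank_inf_ker {K V W : Type*} [DivisionRing K] [AddCommGroup V]
    [Module K V] [AddCommGroup W] [Module K W] (f : V →ₗ[K] W) (U : Submodule K V)
    [FiniteDimensional K U] :
    finrank K (U.map f) + finrank K ↥(U ⊓ LinearMap.ker f) = finrank K U := by
  have hrange : LinearMap.range (f.domRestrict U) = U.map f := by
    rw [LinearMap.domRestrict, LinearMap.range_comp, range_subtype]
  have hker : (LinearMap.ker (f.domRestrict U)).map U.subtype = U ⊓ LinearMap.ker f := by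
    rw [LinearMap.domRestrict, LinearMap.ker_comp, map_comap_subtype]
  rw [← hrange, ← hker, finrank_map_subtype_eq]
  exact LinearMap.finrank_range_add_finrank_ker _

section DotProduct

variable {ι R : Type*} [Fintype ι] [CommSemiring R]

theorem isRefl_dotProductBilin :
    LinearMap.BilinForm.IsRefl (dotProductBilin R R : LinearMap.BilinForm R (ι → R)) :=
  fun x y h => (dotProduct_comm y x).trans h

theorem nondegenerate_dotProductBilin :
    LinearMap.BilinForm.Nondegenerate (dotProductBilin R R : LinearMap.BilinForm R (ι → R)) :=
  ⟨dotProduct_eq_zero, fun x hx =>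
    dotProduct_eq_zero x fun y => isRefl_dotProductBilin y x (hx y)⟩

end DotProduct

section Perp

variable {K : Type} [Field K]

theorem mem_perp {W : Submodule K (Fin n → K)} {x : Fin n → K} :
    x ∈ perp W ↔ ∀ y ∈ W, y ⬝ᵥ x = 0 := by
  simp [perp, dotLin, dotProduct, mem_iInf]

theorem perp_eq_orthogonal (W : Submodule K (Fin n → K)) :
    perp W = LinearMap.BilinForm.orthogonal (dotProductBilin K K) W :=
  Submodule.ext fun _ => mem_perp

theorem perp_perp (W : Submodule K (Fin n → K)) : perp (perp W) = W := by
  simp only [perp_eq_orthogonal]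
  exact LinearMap.BilinForm.orthogonal_orthogonal nondegenerate_dotProductBilin
    isRefl_dotProductBilin W

theorem finrank_add_finrank_perp (W : Submodule K (Fin n → K)) :
    finrank K W + finrank K (perp W) = n := by
  rw [perp_eq_orthogonal, LinearMap.BilinForm.finrank_orthogonal nondegenerate_dotProductBilin,
    Nat.add_sub_cancel' W.finrank_le, finrank_fin_fun]

theorem le_perp_comm {U W : Submodule K (Fin n → K)} : U ≤ perp W ↔ W ≤ perp U := by
  simp only [SetLike.le_def, mem_perp]
  exact ⟨fun h w hw u hu => dotProduct_comm u w ▸ h hu w hw,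
    fun h u hu w hw => dotProduct_comm w u ▸ h hw u hu⟩

theorem perp_sup (U W : Submodule K (Fin n → K)) : perp (U ⊔ W) = perp U ⊓ perp W :=
  eq_of_forall_le_iff fun X => by
    rw [le_inf_iff, le_perp_comm, sup_le_iff, le_perp_comm, le_perp_comm (U := W)]

theorem finrank_add_finrank_add_finrank_perp_inf_perp (U W : Submodule K (Fin n → K)) :
    finrank K U + finrank K W + finrank K ↥(perp U ⊓ perp W) = n + finrank K ↥(U ⊓ W) := by
  rw [← finrank_sup_add_finrank_inf_eq, ← perp_sup, add_right_comm, finrank_add_finrank_perp]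

theorem span_le_perp_span {s t : Set (Fin n → K)} (h : ∀ x ∈ s, ∀ y ∈ t, y ⬝ᵥ x = 0) :
    span K s ≤ perp (span K t) := by
  refine span_le.2 fun x hx => mem_perp.2 fun y hy => ?_
  induction hy using span_induction with
  | mem y hy => exact h x hx y hy
  | zero => exact zero_dotProduct x
  | add y z _ _ hy hz => rw [add_dotProduct, hy, hz, add_zero]
  | smul c y _ hy => rw [smul_dotProduct, hy, smul_zero]

end Perp

section ScalarExtension

variable {Fq Fqm : Type} [Field Fq] [Field Fqm] [Algebra Fq Fqm]

theorem embFq_dotProduct_embFq (x y : Fin n → Fq) :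
    embFq Fq Fqm x ⬝ᵥ embFq Fq Fqm y = algebraMap Fq Fqm (x ⬝ᵥ y) := by
  simp [embFq, dotProduct]

theorem VL_span (s : Set (Fin n → Fq)) : VL Fqm (span Fq s) = span Fqm (embFq Fq Fqm '' s) := by
  rw [VL, ← map_coe, map_span, span_span_of_tower]

theorem finrank_VL (L : Submodule Fq (Fin n → Fq)) : finrank Fqm (VL Fqm L) = finrank Fq L := by
  let b := finBasis Fq L
  have hspan : span Fq (Set.range fun i => (b i : Fin n → Fq)) = L := by
    rw [Set.range_comp' Subtype.val b, ← coe_subtype, ← map_span, b.span_eq, map_subtype_top]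
  have hindep : LinearIndependent Fqm fun i => embFq Fq Fqm (b i : Fin n → Fq) :=
    linearIndependent_algebraMap_comp_iff.2 (b.linearIndependent.map' L.subtype L.ker_subtype)
  conv_lhs => rw [← hspan, VL_span, ← Set.range_comp]
  exact (finrank_span_eq_card hindep).trans (Fintype.card_fin _)

theorem VL_perp (L : Submodule Fq (Fin n → Fq)) : VL Fqm (perp L) = perp (VL Fqm L) := by
  refine eq_of_le_of_finrank_eq (span_le_perp_span ?_) ?_
  · rintro _ ⟨x, hx, rfl⟩ _ ⟨y, hy, rfl⟩
    rw [embFq_dotProduct_embFq, mem_perp.1 hx y hy, map_zero]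
  · have hL := finrank_add_finrank_perp L
    have hVL := finrank_add_finrank_perp (VL Fqm L)
    rw [finrank_VL] at hVL ⊢
    lia

theorem finrank_punct_add_finrank_inf_VL_perp (L : Submodule Fq (Fin n → Fq))
    (C : Submodule Fqm (Fin n → Fqm)) :
    finrank Fqm (punct L C) + finrank Fqm ↥(C ⊓ VL Fqm (perp L)) = finrank Fqm C := by
  have rank_nullity := finrank_map_add_finrank_inf_ker (VL Fqm (perp L)).mkQ C
  rwa [ker_mkQ] at rank_nullity

theorem finrank_punct_add_finrank_perp_inf_VL (L : Submodule Fq (Fin n → Fq))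
    (C : Submodule Fqm (Fin n → Fqm)) :
    finrank Fqm (punct L C) + finrank Fqm ↥(perp C ⊓ VL Fqm L) = finrank Fq L := by
  have hpunct := finrank_punct_add_finrank_inf_VL_perp L C
  have hinf := finrank_add_finrank_add_finrank_perp_inf_perp C (VL Fqm (perp L))
  have hL := finrank_add_finrank_perp L
  rw [← VL_perp, perp_perp, finrank_VL] at hinf
  lia

end ScalarExtension

theorem stmt13_general (n k : ℕ) (Fq Fqm : Type) [Field Fq] [Field Fqm] [Algebra Fq Fqm]
    (C : Submodule Fqm (Fin n → Fqm)) (hk : finrank Fqm C = k)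
    (L : Submodule Fq (Fin n → Fq)) :
    ((finrank Fqm (punct L C) : ℤ)
        = (finrank Fq L : ℤ) - (finrank Fqm ↥(perp C ⊓ VL Fqm L) : ℤ)) ∧
    ((finrank Fqm (punct L C) : ℤ)
        = (k : ℤ) - (finrank Fqm ↥(C ⊓ VL Fqm (perp L)) : ℤ)) := by
  have hshortDual := finrank_punct_add_finrank_perp_inf_VL L C
  have hshort := finrank_punct_add_finrank_inf_VL_perp L C
  constructor <;> lia

/-- generalized Forney lemma:
`dim C^L = dim_{Fq} L − dim (C^⊥)_L = k − dim C_{L^⊥}`. -/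
theorem stmt13 (q m n k : ℕ) (Fq Fqm : Type) [Field Fq] [Field Fqm] [Algebra Fq Fqm]
    [Finite Fqm] (hq : Nat.card Fq = q) (hm : finrank Fq Fqm = m)
    (C : Submodule Fqm (Fin n → Fqm)) (hk : finrank Fqm C = k)
    (L : Submodule Fq (Fin n → Fq)) :
    ((finrank Fqm (punct L C) : ℤ)
        = (finrank Fq L : ℤ) - (finrank Fqm ↥(perp C ⊓ VL Fqm L) : ℤ)) ∧
    ((finrank Fqm (punct L C) : ℤ)
        = (k : ℤ) - (finrank Fqm ↥(C ⊓ VL Fqm (perp L)) : ℤ)) :=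
  stmt13_general n k Fq Fqm C hk L

end RankPaper
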